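/- Let S be a skew lattice with D-classes A > B, let a ∈ A and b ∈ B. Then there is exactly one element y of the coset A∧b∧A satisfying a∧y = y = y∧a (i.e., y ≤ a in the natural partial order): the image set of a in B is a transversal of the cosets of A in B. -/

import Mathlib

/-!
Write `∧` as multiplication. Let `y = a' * b * a'` lie below `a`, where `a'` is `D`-related to `a`.
Then `y = a * y * a = a * (a' * b * a') * a`. In a regular band, conjugation by `a` does not see
the factors `a'` when `a * a' * a = a`, so `y = a * b * a`, which lies below `a`.

That the meet of a skew lattice is regular comes from the absorption laws. If `c` lies below the
`D`-class of `a`, then `c ⊔ a` is `R`-related to `a`, so `(c ⊔ a) * b = a` for every `b` that is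
`L`-related to `a`, and absorption gives `c * a = c * (c ⊔ a) * b = c * b`. Hence `L` is a left
congruence and, by left-right symmetry, `R` is a right congruence. Consequently `x * y * x * z * x`
and `x * y * z * x` are both `L`- and `R`-related, which makes them equal.
-/

open MulOpposite

/-- A band: an idempotent semigroup. -/
class Band (S : Type*) extends Semigroup S where
  mul_self (x : S) : x * x = x

/-- A regular band, the setting in which image sets are shown to be transversals of cosets. -/
class RegularBand (S : Type*) extends Band S where
  mul_mul_mul_mul_eq (x y z : S) : x * y * x * z * x = x * y * z * x

/-- A skew lattice. The meet `∧` is written multiplicatively and the join `∨` as `⊔`, so that the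
results on bands and on opposite semigroups apply to the meet. -/
class SkewLattice (S : Type*) extends Band S, Max S where
  sup_self (x : S) : x ⊔ x = x
  sup_assoc (x y z : S) : x ⊔ y ⊔ z = x ⊔ (y ⊔ z)
  mul_sup_self (x y : S) : x * (x ⊔ y) = x
  sup_mul_self (x y : S) : (y ⊔ x) * x = x
  sup_mul_cancel (x y : S) : x ⊔ x * y = x
  mul_sup_cancel (x y : S) : y * x ⊔ x = x

section GreenRelations

variable {S : Type*} [Mul S] {x y : S}

/-- Green's relation `L`, in the equational form it takes in a band. -/
def GreenL (x y : S) : Prop := x * y = x ∧ y * x = y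

/-- Green's relation `R`, in the equational form it takes in a band. -/
def GreenR (x y : S) : Prop := x * y = y ∧ y * x = x

/-- Green's relation `D`, in the equational form it takes in a band. -/
def GreenD (x y : S) : Prop := x * y * x = x ∧ y * x * y = y

/-- The coset `A ∧ b ∧ A`. The same element of `A` stands on both sides of `b`. -/
def meetCoset (A : Set S) (b : S) : Set S := {z | ∃ a ∈ A, z = a * b * a}

theorem GreenL.symm (h : GreenL x y) : GreenL y x := And.symm h

theorem GreenL.eq_of_greenR (hL : GreenL x y) (hR : GreenR x y) : x = y :=
  hL.1.symm.trans hR.1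

theorem greenL_op_iff : GreenL (op x) (op y) ↔ GreenR x y := by
  simp only [GreenL, GreenR, ← op_mul, op_inj, and_comm]

end GreenRelations

section Band

variable {S : Type*} [Band S]

theorem mul_eq_of_greenR_of_greenL {p a b : S} (hR : GreenR p a) (hL : GreenL a b) :
    p * b = a := by
  have b_eq : b * p * a = b := by rw [mul_assoc, hR.1, hL.2]
  have bpb : b * p * b = b := by
    calc b * p * b = (b * p) * (b * p) * a := by rw [mul_assoc _ _ a, b_eq]
      _ = b := by rw [Band.mul_self, b_eq]
  calc p * b = a * b * p * b := by rw [hL.1, hR.2]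
    _ = a * (b * p * b) := by simp only [mul_assoc]
    _ = a := by rw [bpb, hL.1]

theorem greenL_mul_of_mul_eq {x y : S} (h : y * x = y) : GreenL y (x * y) :=
  ⟨by rw [← mul_assoc, h, Band.mul_self], by rw [mul_assoc, Band.mul_self]⟩

end Band

namespace SkewLattice

variable {S : Type*} [SkewLattice S] {a b c : S}

instance : SkewLattice Sᵐᵒᵖ where
  mul_self _ := unop_injective (Band.mul_self _)
  max x y := op (unop y ⊔ unop x)
  sup_self _ := unop_injective (sup_self _)
  sup_assoc _ _ _ := unop_injective (sup_assoc _ _ _).symm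
  mul_sup_self _ _ := unop_injective (sup_mul_self _ _)
  sup_mul_self _ _ := unop_injective (mul_sup_self _ _)
  sup_mul_cancel _ _ := unop_injective (mul_sup_cancel _ _)
  mul_sup_cancel _ _ := unop_injective (sup_mul_cancel _ _)

theorem greenR_sup (h : c * a * c = c) : GreenR (c ⊔ a) a := by
  have mul_sup : c * a ⊔ c = c * a := by
    simpa only [h] using sup_mul_cancel (c * a) c
  have mul_sup_sup : c * a ⊔ (c ⊔ a) = a := by
    rw [← sup_assoc, mul_sup, mul_sup_cancel]
  refine ⟨sup_mul_self a c, ?_⟩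
  simpa only [mul_sup_sup] using sup_mul_self (c ⊔ a) (c * a)

theorem mul_eq_mul_of_greenL (hL : GreenL a b) (h : c * a * c = c) : c * a = c * b := by
  calc c * a = c * ((c ⊔ a) * b) := by rw [mul_eq_of_greenR_of_greenL (greenR_sup h) hL]
    _ = c * b := by rw [← mul_assoc, mul_sup_self]

theorem mul_mul_mul_left_of_greenL (hL : GreenL a b) (c : S) : c * a * (c * b) = c * a := by
  have caca : c * a * c * a = c * a := by rw [mul_assoc, Band.mul_self]
  have below : c * a * c * a * (c * a * c) = c * a * c := by
    rw [caca, ← mul_assoc, Band.mul_self]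
  calc c * a * (c * b) = c * a * c * b := (mul_assoc _ _ _).symm
    _ = c * a * c * a := (mul_eq_mul_of_greenL hL below).symm
    _ = c * a := caca

theorem greenL_mul_left (hL : GreenL a b) (c : S) : GreenL (c * a) (c * b) :=
  ⟨mul_mul_mul_left_of_greenL hL c, mul_mul_mul_left_of_greenL hL.symm c⟩

theorem greenR_mul_right (hR : GreenR a b) (c : S) : GreenR (a * c) (b * c) :=
  greenL_op_iff.1 (greenL_mul_left (greenL_op_iff.2 hR) (op c))

theorem mul_mul_eq_mul {x p q : S} (hp : x * p = p) (hq : q * x = q) : p * x * q = p * q := by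
  have hL : GreenL (p * q) (p * x * q) := by
    rw [mul_assoc]
    exact greenL_mul_left (greenL_mul_of_mul_eq hq) p
  have hR : GreenR (p * q) (p * x * q) := by
    refine greenR_mul_right (greenL_op_iff.1 ?_) q
    exact greenL_mul_of_mul_eq (congrArg op hp)
  exact (hL.eq_of_greenR hR).symm

instance : RegularBand S where
  mul_mul_mul_mul_eq x y z := by
    have h := mul_mul_eq_mul (x := x) (p := x * y) (q := z * x)
      (by rw [← mul_assoc, Band.mul_self]) (by rw [mul_assoc, Band.mul_self])
    simpa only [mul_assoc] using h

end SkewLattice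

namespace RegularBand

variable {S : Type*} [RegularBand S] {x u v : S}

theorem mul_conj_mul (h : x * u * x = x) (t : S) : x * (u * t * u) * x = x * t * x := by
  calc x * (u * t * u) * x = x * u * (t * u) * x := by simp only [mul_assoc]
    _ = x * u * x * (t * u) * x := (mul_mul_mul_mul_eq x u (t * u)).symm
    _ = x * t * u * x := by rw [h, ← mul_assoc]
    _ = x * t * x * u * x := (mul_mul_mul_mul_eq x t u).symm
    _ = x * t * (x * u * x) := by simp only [mul_assoc]
    _ = x * t * x := by rw [h]

theorem mul_mul_self_trans (hu : x * u * x = x) (hv : u * v * u = u) : x * v * x = x := by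
  rw [← mul_conj_mul hu, hv, hu]

end RegularBand

theorem imageSet_transversal_general {S : Type*} [RegularBand S] {a₀ a : S} (ha : GreenD a a₀)
    (b : S) : ∃! y : S, y ∈ meetCoset {x | GreenD x a₀} b ∧ a * y = y ∧ y * a = y := by
  refine ⟨a * b * a, ⟨⟨a, ha, rfl⟩, ?_, ?_⟩, ?_⟩
  · rw [← mul_assoc, ← mul_assoc, Band.mul_self]
  · rw [mul_assoc, Band.mul_self]
  · rintro y ⟨⟨a', ha', rfl⟩, left_fixed, right_fixed⟩
    have aa'a : a * a' * a = a := RegularBand.mul_mul_self_trans ha.1 ha'.2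
    calc a' * b * a' = a * (a' * b * a') * a := by rw [left_fixed, right_fixed]
      _ = a * b * a := RegularBand.mul_conj_mul aa'a b

/-- The image set of a in B is a transversal of the cosets of A in B: each coset
contains exactly one element below a. -/
theorem imageSet_transversal {S : Type*} (wedge vee : S → S → S)
    (wedge_idem : ∀ x : S, wedge x x = x)
    (vee_idem : ∀ x : S, vee x x = x)
    (wedge_assoc : ∀ x y z : S, wedge (wedge x y) z = wedge x (wedge y z))
    (vee_assoc : ∀ x y z : S, vee (vee x y) z = vee x (vee y z))
    (abs₁ : ∀ x y : S, wedge x (vee x y) = x)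
    (abs₂ : ∀ x y : S, wedge (vee y x) x = x)
    (abs₃ : ∀ x y : S, vee x (wedge x y) = x)
    (abs₄ : ∀ x y : S, vee (wedge y x) x = x)
    (a₀ b₀ : S) (hAB : wedge (wedge b₀ a₀) b₀ = b₀)
    (A : Set S) (hA : A = {x | wedge (wedge x a₀) x = x ∧ wedge (wedge a₀ x) a₀ = a₀})
    (B : Set S) (hB : B = {x | wedge (wedge x b₀) x = x ∧ wedge (wedge b₀ x) b₀ = b₀})
    (a : S) (ha : a ∈ A) (b : S) (hb : b ∈ B) :
    ∃! y : S, y ∈ {z | ∃ a' ∈ A, z = wedge (wedge a' b) a'} ∧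
      wedge a y = y ∧ wedge y a = y := by
  let _ : SkewLattice S :=
    { mul := wedge, mul_assoc := wedge_assoc, mul_self := wedge_idem
      max := vee, sup_self := vee_idem, sup_assoc := vee_assoc
      mul_sup_self := abs₁, sup_mul_self := abs₂, sup_mul_cancel := abs₃, mul_sup_cancel := abs₄ }
  subst hA
  exact imageSet_transversal_general ha b
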